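/- Let L, m, ℓ, n be natural numbers with ℓ < m, and let w be a word of length L over the alphabet consisting of the unbarred letters 1, 2, …, m, the barred letters 1̄, 2̄, …, m̄, and one extra letter φ. For 1 ≤ j ≤ m let c_j denote the number of positions of w carrying the letter j and c̄_j the number of positions carrying the letter j̄. Suppose λ_1, …, λ_ℓ are positive natural numbers such that c_j − c̄_j = λ_j for all 1 ≤ j ≤ ℓ, and that c_j = c̄_j and c_j > 0 for all ℓ < j ≤ m. Set M = max_{ℓ < j ≤ m} c̄_j and |λ| = λ_1 + λ_2 + ⋯ + λ_ℓ. If n > (2ℓ + 1) + (L − |λ|), then n ≥ 2·(M + m). -/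

import Mathlib

/-- the combinatorial core of the rank estimate: under the count-profile
hypotheses, if `n > (2ℓ + 1) + (L - |λ|)` then `n ≥ 2·(M + m)` where
`M = max_{ℓ < j ≤ m} c̄_j`. -/
theorem stmt2 (L m ℓ n : ℕ) (hℓm : ℓ < m)
    (w : Fin L → (Fin m × Bool) ⊕ Unit)
    (c cbar : Fin m → ℕ)
    (hc : ∀ j : Fin m, c j = (Finset.univ.filter (fun i => w i = Sum.inl (j, false))).card)
    (hcbar : ∀ j : Fin m, cbar j = (Finset.univ.filter (fun i => w i = Sum.inl (j, true))).card)
    (lam : Fin ℓ → ℕ) (hpos : ∀ j, 0 < lam j)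
    (hlam : ∀ j : Fin ℓ, c (Fin.castLE hℓm.le j) = cbar (Fin.castLE hℓm.le j) + lam j)
    (heq : ∀ j : Fin m, ℓ ≤ (j : ℕ) → c j = cbar j ∧ 0 < c j)
    (M : ℕ)
    (hM : M = (Finset.univ.filter (fun j : Fin m => ℓ ≤ (j : ℕ))).sup cbar)
    (hn : n > (2 * ℓ + 1) + (L - ∑ j, lam j)) :
    n ≥ 2 * (M + m) := by
  classical
  have hL : ∑ j, (c j + cbar j) ≤ L := by
    have h := Finset.card_eq_sum_card_fiberwise (f := w) (s := Finset.univ) (t := Finset.univ)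
      (fun _ _ => Finset.mem_coe.2 (Finset.mem_univ _))
    rw [Fintype.sum_sum_type, Fintype.sum_prod_type] at h
    simp only [Fintype.sum_bool, Finset.card_univ, Fintype.card_fin] at h
    have h2 : ∑ j, (c j + cbar j) = ∑ j : Fin m,
        ((Finset.univ.filter (fun i => w i = Sum.inl (j, true))).card +
         (Finset.univ.filter (fun i => w i = Sum.inl (j, false))).card) :=
      Finset.sum_congr rfl (fun j _ => by rw [hc, hcbar, add_comm])
    omega
  obtain ⟨k, rfl⟩ := Nat.exists_eq_add_of_le hℓm.le
  rw [Fin.sum_univ_add] at hL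
  have h1 : ∑ j, lam j ≤ ∑ i : Fin ℓ, (c (Fin.castAdd k i) + cbar (Fin.castAdd k i)) := by
    refine Finset.sum_le_sum (fun i _ => ?_)
    have := hlam i
    change c (Fin.castAdd k i) = cbar (Fin.castAdd k i) + lam i at this
    omega
  have h2 : ∑ i : Fin k, (c (Fin.natAdd ℓ i) + cbar (Fin.natAdd ℓ i))
      = 2 * ∑ i : Fin k, cbar (Fin.natAdd ℓ i) := by
    rw [Finset.mul_sum]
    refine Finset.sum_congr rfl (fun i _ => ?_)
    have := (heq (Fin.natAdd ℓ i) (by simp)).1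
    omega
  have h3 : M + (k - 1) ≤ ∑ i : Fin k, cbar (Fin.natAdd ℓ i) := by
    have hne : (Finset.univ.filter (fun j : Fin (ℓ + k) => ℓ ≤ (j : ℕ))).Nonempty :=
      ⟨⟨ℓ, hℓm⟩, by simp⟩
    obtain ⟨j, hj, hs⟩ := Finset.exists_mem_eq_sup _ hne cbar
    have hj' : ℓ ≤ (j : ℕ) := by simpa using hj
    obtain ⟨i, rfl⟩ : ∃ i : Fin k, Fin.natAdd ℓ i = j :=
      ⟨⟨j - ℓ, by omega⟩, Fin.ext (by simp; omega)⟩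
    rw [hM, hs, ← Finset.add_sum_erase _ _ (Finset.mem_univ i)]
    have h4 := Finset.card_nsmul_le_sum (Finset.univ.erase i)
      (fun i : Fin k => cbar (Fin.natAdd ℓ i)) 1 (fun x _ => by
        have := heq (Fin.natAdd ℓ x) (by simp)
        omega)
    simp only [Finset.card_erase_of_mem (Finset.mem_univ i), Finset.card_univ,
      Fintype.card_fin, smul_eq_mul, mul_one] at h4
    omega
  omega
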